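/- For integers n ≥ 2 and 1 ≤ k ≤ n-1, the number of dissections of a convex polygon with n+1 labelled edges by k-1 pairwise noncrossing diagonals is D_{n+1,k-1} = (1/k) · C(n-2, k-1) · C(n+k-1, k-1) (Kirkman–Cayley formula). -/

import Mathlib

/-- A nested family of `k` intervals of `{1,...,n}`: each of cardinality ≥ 2,
containing the full interval, any two nested or disjoint. -/
def IsIntNested (n k : ℕ) (S : Finset (Finset ℕ)) : Prop :=
  S.card = k ∧ Finset.Icc 1 n ∈ S ∧
  (∀ A ∈ S, 2 ≤ A.card ∧ ∃ i j, 1 ≤ i ∧ i ≤ j ∧ j ≤ n ∧ A = Finset.Icc i j) ∧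
  (∀ A ∈ S, ∀ B ∈ S, A ⊆ B ∨ B ⊆ A ∨ Disjoint A B)


namespace KC

/-- Laminar family of intervals `[a,b]`, `1 ≤ a < b ≤ n`, encoded as pairs. -/
def Good (n : ℕ) (S : Finset (ℕ × ℕ)) : Prop :=
  (∀ p ∈ S, 1 ≤ p.1 ∧ p.1 < p.2 ∧ p.2 ≤ n) ∧
  (∀ p ∈ S, ∀ q ∈ S, (p.1 ≤ q.1 ∧ q.2 ≤ p.2) ∨ (q.1 ≤ p.1 ∧ p.2 ≤ q.2) ∨ p.2 < q.1 ∨ q.2 < p.1)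

open Classical in
/-- Starting points of the components. -/
noncomputable def P (n : ℕ) (S : Finset (ℕ × ℕ)) : Finset ℕ :=
  (Finset.Icc 1 n).filter (fun j => ∀ p ∈ S, ¬ (p.1 < j ∧ j ≤ p.2))

open Classical in
noncomputable def fam (n k r : ℕ) : Finset (Finset (ℕ × ℕ)) :=
  ((Finset.range (n+1) ×ˢ Finset.range (n+1)).powerset).filter
    (fun S => Good n S ∧ S.card = k ∧ (P n S).card = r)

lemma mem_P {n : ℕ} {S : Finset (ℕ × ℕ)} {j : ℕ} :
    j ∈ P n S ↔ (1 ≤ j ∧ j ≤ n) ∧ ∀ p ∈ S, ¬ (p.1 < j ∧ j ≤ p.2) := by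
  simp [P]

lemma mem_fam {n k r : ℕ} {S : Finset (ℕ × ℕ)} :
    S ∈ fam n k r ↔ Good n S ∧ S.card = k ∧ (P n S).card = r := by
  simp only [fam, Finset.mem_filter, Finset.mem_powerset, and_iff_right_iff_imp]
  rintro ⟨h, -⟩ p hp
  have := h.1 p hp
  simp; omega

lemma last_mem {n : ℕ} {S : Finset (ℕ × ℕ)} (hn : 1 ≤ n) (hS : Good n S) (h : n ∉ P n S) :
    ∃ i, (i, n) ∈ S ∧ i ∈ P n S ∧ i < n ∧ ∀ j ∈ P n S, j ≤ i := by
  have h1 : ∃ a, (a, n) ∈ S := by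
    rw [mem_P] at h
    push Not at h
    obtain ⟨⟨a, b⟩, hp, h1, h2⟩ := h ⟨hn, le_rfl⟩
    have := (hS.1 _ hp).2.2
    have : b = n := by simp at *; omega
    subst this
    exact ⟨a, hp⟩
  classical
  have hs := Nat.find_spec h1
  have hm := fun m (hm : m < Nat.find h1) => Nat.find_min h1 hm
  set a := Nat.find h1
  have ha := hS.1 _ hs
  simp only at ha
  refine ⟨a, hs, ?_, ha.2.1, ?_⟩
  · rw [mem_P]
    refine ⟨by omega, ?_⟩
    rintro ⟨c, d⟩ hp ⟨h1, h2⟩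
    have h3 := hS.2 _ hp _ hs
    have h4 := hS.1 _ hp
    simp only at *
    have : d = n := by omega
    subst this
    exact hm c h1 hp
  · intro j hj
    rw [mem_P] at hj
    have := hj.2 _ hs
    simp only at this
    omega

lemma exists_rank (Q : Finset ℕ) (r : ℕ) (hr : r + 1 ≤ Q.card) :
    ∃ i ∈ Q, (Q.filter (· ≤ i)).card = r + 1 := by
  induction h : Q.card generalizing Q with
  | zero => omega
  | succ c ih =>
    have hne : Q.Nonempty := Finset.card_pos.mp (by omega)
    have hmem := Q.max'_mem hne
    have hle := fun x hx => Q.le_max' x hx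
    set M := Q.max' hne
    by_cases hc : r = c
    · refine ⟨M, hmem, ?_⟩
      rw [Finset.filter_true_of_mem (by exact hle)]; omega
    · have hcard := Finset.card_erase_of_mem hmem
      obtain ⟨i, hi, hi2⟩ := ih (Q.erase M) (by omega) (by omega)
      have hi' := Finset.mem_erase.mp hi
      refine ⟨i, hi'.2, ?_⟩
      rw [← hi2]
      congr 1
      ext x
      simp only [Finset.mem_filter, Finset.mem_erase]
      have := hle i hi'.2
      constructor
      · rintro ⟨h1, h2⟩
        exact ⟨⟨by omega, h1⟩, h2⟩
      · rintro ⟨⟨_, h1⟩, h2⟩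
        exact ⟨h1, h2⟩

lemma rank_lt (Q : Finset ℕ) {i j : ℕ} (hj : j ∈ Q) (hij : i < j) :
    (Q.filter (· ≤ i)).card < (Q.filter (· ≤ j)).card := by
  apply Finset.card_lt_card
  rw [Finset.ssubset_iff_of_subset]
  · exact ⟨j, by simp [hj], by simp [hij]⟩
  · intro x; simp; intro h1 h2; exact ⟨h1, by omega⟩

lemma rank_inj (Q : Finset ℕ) {i j : ℕ} (hi : i ∈ Q) (hj : j ∈ Q)
    (h : (Q.filter (· ≤ i)).card = (Q.filter (· ≤ j)).card) : i = j := by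
  rcases lt_trichotomy i j with h1 | h1 | h1
  · have := rank_lt Q hj h1; omega
  · exact h1
  · have := rank_lt Q hi h1; omega

/-- uncovered last element -/
lemma good_succ {n : ℕ} {S : Finset (ℕ × ℕ)} :
    (Good (n+1) S ∧ n + 1 ∈ P (n+1) S) ↔ Good n S := by
  constructor
  · rintro ⟨h, h2⟩
    refine ⟨?_, h.2⟩
    intro p hp
    have h3 := h.1 p hp
    have h4 := (mem_P.mp h2).2 p hp
    omega
  · intro h
    refine ⟨⟨fun p hp => ?_, h.2⟩, ?_⟩
    · have := h.1 p hp; omega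
    · rw [mem_P]
      refine ⟨by omega, fun p hp => ?_⟩
      have := h.1 p hp; omega

lemma P_succ {n : ℕ} {S : Finset (ℕ × ℕ)} (h : Good n S) :
    (P (n+1) S).card = (P n S).card + 1 := by
  have h2 := (good_succ.mpr h).2
  have : P (n+1) S = insert (n+1) (P n S) := by
    ext x
    rw [Finset.mem_insert]
    by_cases hx : x = n + 1
    · subst hx; simp [h2]
    · simp only [mem_P, hx, false_or]
      refine and_congr_left fun _ => by omega
  rw [this, Finset.card_insert_of_notMem]
  rw [mem_P]; omega

lemma insert_good {n i : ℕ} {S : Finset (ℕ × ℕ)} (h : Good n S) (hi : i ∈ P n S) (hin : i < n) :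
    Good n (insert (i, n) S) := by
  rw [mem_P] at hi
  have key : ∀ p ∈ S, (i ≤ p.1 ∧ p.2 ≤ n) ∨ p.2 < i := by
    intro p hp
    have := hi.2 p hp
    have := h.1 p hp
    omega
  refine ⟨?_, ?_⟩
  · intro p hp
    rcases Finset.mem_insert.mp hp with rfl | hp
    · exact ⟨hi.1.1, hin, le_rfl⟩
    · exact h.1 p hp
  · intro p hp q hq
    rcases Finset.mem_insert.mp hp with rfl | hp <;> rcases Finset.mem_insert.mp hq with rfl | hq
    · simp
    · have := key q hq; simp only; omega
    · have := key p hp; simp only; omega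
    · exact h.2 p hp q hq

lemma P_insert {n i : ℕ} {S : Finset (ℕ × ℕ)} :
    P n (insert (i, n) S) = (P n S).filter (· ≤ i) := by
  ext x
  simp only [mem_P, Finset.mem_filter, Finset.forall_mem_insert]
  constructor
  · rintro ⟨h1, h2, h3⟩
    exact ⟨⟨h1, h3⟩, by omega⟩
  · rintro ⟨⟨h1, h3⟩, h2⟩
    exact ⟨h1, by omega, h3⟩

lemma erase_good {n : ℕ} {S : Finset (ℕ × ℕ)} (h : Good n S) (p) : Good n (S.erase p) :=
  ⟨fun q hq => h.1 q (Finset.mem_of_mem_erase hq),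
   fun q hq q' hq' => h.2 q (Finset.mem_of_mem_erase hq) q' (Finset.mem_of_mem_erase hq')⟩

/-- key structural fact -/
lemma struct {n : ℕ} {S : Finset (ℕ × ℕ)} (hn : 1 ≤ n) (hS : Good n S) (h : n ∉ P n S) :
    ∃ i S', Good n S' ∧ (i, n) ∉ S' ∧ S = insert (i, n) S' ∧ i ∈ P n S' ∧ i < n ∧
      ((P n S').filter (· ≤ i)).card < (P n S').card := by
  obtain ⟨i, hi, hiP, hin, hmax⟩ := last_mem hn hS h
  have hg := erase_good hS (i, n)
  have hins : insert (i, n) (S.erase (i, n)) = S := Finset.insert_erase hi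
  have hP := P_insert (n := n) (i := i) (S := S.erase (i, n))
  rw [hins] at hP
  have hiP' : i ∈ P n (S.erase (i, n)) := by
    rw [hP] at hiP; exact (Finset.mem_filter.mp hiP).1
  refine ⟨i, S.erase (i, n), hg, Finset.notMem_erase _ _, hins.symm, hiP', hin, ?_⟩
  have hex : ∃ j ∈ P n (S.erase (i, n)), i < j := by
    by_cases hnP : n ∈ P n (S.erase (i, n))
    · exact ⟨n, hnP, hin⟩
    · obtain ⟨i', h1, h2, h3, h4⟩ := last_mem hn hg hnP
      refine ⟨i', h2, ?_⟩
      have h5 := h4 i hiP'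
      have : i' ≠ i := by
        rintro rfl
        exact Finset.notMem_erase _ _ h1
      omega
  obtain ⟨j, hj, hij⟩ := hex
  exact lt_of_lt_of_le (rank_lt _ hj hij) (Finset.card_le_card (Finset.filter_subset _ _))

open Classical in
lemma card_covered (n k r : ℕ) (hn : 1 ≤ n) :
    ((fam n (k+1) (r+1)).filter (fun S => n ∉ P n S)).card =
      ((Finset.Icc (r+2) n).biUnion (fun r' => fam n k r')).card := by
  symm
  have mem2 : ∀ S, S ∈ (Finset.Icc (r+2) n).biUnion (fun r' => fam n k r') ↔
      Good n S ∧ S.card = k ∧ r + 2 ≤ (P n S).card := by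
    intro S
    simp only [Finset.mem_biUnion, Finset.mem_Icc, mem_fam]
    constructor
    · rintro ⟨r', h1, h2, h3, h4⟩
      exact ⟨h2, h3, by omega⟩
    · rintro ⟨h1, h2, h3⟩
      refine ⟨_, ⟨h3, ?_⟩, h1, h2, rfl⟩
      calc (P n S).card ≤ (Finset.Icc 1 n).card := Finset.card_le_card (Finset.filter_subset _ _)
        _ = n := by simp
  have hex : ∀ S, S ∈ (Finset.Icc (r+2) n).biUnion (fun r' => fam n k r') →
      ∃ i ∈ P n S, ((P n S).filter (· ≤ i)).card = r + 1 := by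
    intro S hS
    exact exists_rank _ _ (by have := ((mem2 S).mp hS).2.2; omega)
  choose! f hf1 hf2 using hex
  have hlt : ∀ S (i : ℕ), ((P n S).filter (· ≤ i)).card < (P n S).card → ∃ j ∈ P n S, i < j := by
    intro S i h
    by_contra hcon
    push Not at hcon
    rw [Finset.filter_true_of_mem hcon] at h
    omega
  have hgt : ∀ S, S ∈ (Finset.Icc (r+2) n).biUnion (fun r' => fam n k r') →
      ∃ j ∈ P n S, f S < j := by
    intro S hS
    have := ((mem2 S).mp hS).2.2
    exact hlt _ _ (by rw [hf2 S hS]; omega)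
  have hni : ∀ S, S ∈ (Finset.Icc (r+2) n).biUnion (fun r' => fam n k r') → (f S, n) ∉ S := by
    intro S hS hmem
    obtain ⟨j, hj, hj2⟩ := hgt S hS
    rw [mem_P] at hj
    exact hj.2 _ hmem ⟨hj2, hj.1.2⟩
  have hfn : ∀ S, S ∈ (Finset.Icc (r+2) n).biUnion (fun r' => fam n k r') → f S < n := by
    intro S hS
    obtain ⟨j, hj, hj2⟩ := hgt S hS
    rw [mem_P] at hj
    omega
  have hmaxP : ∀ S, S ∈ (Finset.Icc (r+2) n).biUnion (fun r' => fam n k r') →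
      f S ∈ P n (insert (f S, n) S) ∧ ∀ j ∈ P n (insert (f S, n) S), j ≤ f S := by
    intro S hS
    rw [P_insert]
    refine ⟨by simp [hf1 S hS], ?_⟩
    intro j hj
    exact (Finset.mem_filter.mp hj).2
  apply Finset.card_bij (fun S _ => insert (f S, n) S)
  · intro S hS
    have h := (mem2 S).mp hS
    simp only [Finset.mem_filter, mem_fam]
    refine ⟨⟨insert_good h.1 (hf1 S hS) (hfn S hS), ?_, ?_⟩, ?_⟩
    · rw [Finset.card_insert_of_notMem (hni S hS), h.2.1]
    · rw [P_insert, hf2 S hS]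
    · intro hc
      have := (hmaxP S hS).2 n hc
      have := hfn S hS
      omega
  · intro S hS T hT h
    have a1 := hmaxP S hS
    have a2 := hmaxP T hT
    have : f S = f T := by
      apply le_antisymm
      · apply a2.2; rw [← h]; exact a1.1
      · apply a1.2; rw [h]; exact a2.1
    have h1 := hni S hS
    have h2 := hni T hT
    rw [this] at h h1
    rw [← Finset.erase_insert h1, h, Finset.erase_insert h2]
  · intro S hS
    simp only [Finset.mem_filter, mem_fam] at hS
    obtain ⟨⟨hg, hk, hr⟩, hnP⟩ := hS
    obtain ⟨i, S', h1, h2, rfl, h4, h5, h6⟩ := struct hn hg hnP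
    rw [P_insert] at hr
    rw [Finset.card_insert_of_notMem h2] at hk
    have hS' := (mem2 S').mpr ⟨h1, by omega, by omega⟩
    refine ⟨S', hS', ?_⟩
    have : f S' = i := rank_inj _ (hf1 S' hS') h4 (by rw [hf2 S' hS', hr])
    rw [this]

open Classical in
lemma card_uncovered (n k r : ℕ) :
    ((fam (n+1) k (r+1)).filter (fun S => n+1 ∈ P (n+1) S)) = fam n k r := by
  ext S
  simp only [Finset.mem_filter, mem_fam]
  constructor
  · rintro ⟨⟨h1, h2, h3⟩, h4⟩
    have h := good_succ.mp ⟨h1, h4⟩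
    rw [P_succ h] at h3
    exact ⟨h, h2, by omega⟩
  · rintro ⟨h1, h2, h3⟩
    have h := good_succ.mpr h1
    exact ⟨⟨h.1, h2, by rw [P_succ h1, h3]⟩, h.2⟩

lemma rec_fam (n k r : ℕ) :
    (fam (n+1) (k+1) (r+1)).card =
      (fam n (k+1) r).card + ∑ r' ∈ Finset.Icc (r+2) (n+1), (fam (n+1) k r').card := by
  classical
  rw [← Finset.card_filter_add_card_filter_not (fun S => n+1 ∈ P (n+1) S), card_uncovered,
    card_covered _ _ _ (by omega), Finset.card_biUnion]
  intro a _ b _ hab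
  rw [Function.onFun, Finset.disjoint_left]
  intro S h1 h2
  rw [mem_fam] at h1 h2
  omega

lemma P_empty (n : ℕ) : (P n ∅).card = n := by simp [P]

lemma fam_zero (n r : ℕ) : (fam n 0 r).card = if r = n then 1 else 0 := by
  have : fam n 0 r = if r = n then {∅} else ∅ := by
    ext S
    rw [mem_fam]
    split_ifs with h
    · subst h
      simp only [Finset.mem_singleton, Finset.card_eq_zero]
      constructor
      · exact fun h => h.2.1
      · rintro rfl
        exact ⟨⟨by simp, by simp⟩, rfl, P_empty _⟩
    · simp only [Finset.notMem_empty, iff_false, Finset.card_eq_zero]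
      rintro ⟨_, rfl, h2⟩
      rw [P_empty] at h2; omega
  rw [this]; split_ifs <;> simp

lemma fam_r_zero (n k : ℕ) : (fam (n+1) k 0).card = 0 := by
  rw [Finset.card_eq_zero, Finset.eq_empty_iff_forall_notMem]
  intro S hS
  rw [mem_fam] at hS
  have : 1 ∈ P (n+1) S := by
    rw [mem_P]
    refine ⟨by omega, fun p hp => ?_⟩
    have := hS.1.1 p hp
    omega
  rw [Finset.card_eq_zero.mp hS.2.2] at this
  simp at this

lemma fam_full (n k : ℕ) : (fam n (k+1) n).card = 0 := by
  rw [Finset.card_eq_zero, Finset.eq_empty_iff_forall_notMem]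
  intro S hS
  rw [mem_fam] at hS
  obtain ⟨h1, h2, h3⟩ := hS
  obtain ⟨p, hp⟩ := Finset.card_pos.mp (by omega : 0 < S.card)
  have hfull : P n S = Finset.Icc 1 n :=
    Finset.eq_of_subset_of_card_le (Finset.filter_subset _ _) (by simp [h3])
  have hh := h1.1 p hp
  have : p.2 ∈ P n S := by rw [hfull]; simp; omega
  exact (mem_P.mp this).2 p hp ⟨hh.2.1, le_rfl⟩

noncomputable def U (m j r : ℕ) : ℕ := (fam (r+1+m) (j+1) r).card

lemma U_zero (m j : ℕ) : U m j 0 = 0 := by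
  unfold U
  rw [show 0 + 1 + m = m + 1 by ring]; exact fam_r_zero _ _

lemma U_base (m s : ℕ) : U m 0 (s+1) = U m 0 s + 1 := by
  unfold U
  rw [show s + 1 + 1 + m = (s + 1 + m) + 1 by ring, rec_fam]
  congr 1
  simp only [fam_zero]
  rw [Finset.sum_ite_eq']
  simp

lemma U_step (m j s : ℕ) : U m (j+1) (s+1) = U m (j+1) s +
    ∑ u ∈ Finset.range m, U u j (s+1+m-u) := by
  unfold U
  rw [show s + 1 + 1 + m = (s + 1 + m) + 1 by ring, rec_fam]
  congr 1
  rw [← Finset.Ico_add_one_right_eq_Icc, Finset.sum_Ico_succ_top (by omega), fam_full, add_zero,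
    Finset.sum_Ico_eq_sum_range, ← Finset.sum_range_reflect,
    show s + 1 + m + 1 - (s + 2) = m by omega]
  apply Finset.sum_congr rfl
  intro u hu
  rw [Finset.mem_range] at hu
  congr 2 <;> omega

lemma sum1 (m j : ℕ) : ∑ u ∈ Finset.range m, (u.choose j : ℚ) = m.choose (j+1) := by
  induction m with
  | zero => simp
  | succ m ih => rw [Finset.sum_range_succ, ih, Nat.choose_succ_succ]; push_cast; ring

lemma sum2 (m j : ℕ) : ∑ u ∈ Finset.range m, ((u:ℚ) + 1) * (u.choose j : ℚ) =
    (j+1) * (m+1).choose (j+2) := by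
  induction m with
  | zero => rw [Nat.choose_eq_zero_of_lt (show 0 + 1 < j + 2 by omega)]; simp
  | succ m ih =>
    rw [Finset.sum_range_succ, ih, Nat.choose_succ_succ (m+1)]
    have := Nat.add_one_mul_choose_eq m j
    have : ((m:ℚ)+1) * m.choose j = (m+1).choose (j+1) * (j+1) := by exact_mod_cast this
    push_cast
    linarith

lemma U_formula (j : ℕ) : ∀ r m : ℕ,
    ((j:ℚ)+1) * U m j r = r * (r+m+j+1).choose j * m.choose j := by
  induction j with
  | zero =>
    intro r m
    induction r with
    | zero => simp [U_zero]
    | succ s ih =>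
      rw [U_base]
      simp at *
      exact ih
  | succ j ihj =>
    intro r m
    induction r with
    | zero => simp [U_zero]
    | succ s ih =>
      rw [U_step]
      have hsum : ((j:ℚ)+1) * ∑ u ∈ Finset.range m, (U u j (s+1+m-u) : ℚ) =
          (s+m+j+2).choose j * ((s+m+2) * m.choose (j+1) - (j+1) * (m+1).choose (j+2)) := by
        rw [← sum2, ← sum1, Finset.mul_sum, Finset.mul_sum, ← Finset.sum_sub_distrib,
          Finset.mul_sum]
        apply Finset.sum_congr rfl
        intro u hu
        rw [Finset.mem_range] at hu
        rw [ihj, show s + 1 + m - u + u + j + 1 = s+m+j+2 by omega, Nat.cast_sub (by omega)]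
        push_cast
        ring
      have e1 : ((m:ℚ)+1) * m.choose (j+1) = (m+1).choose (j+2) * (j+2) := by
        exact_mod_cast Nat.add_one_mul_choose_eq m (j+1)
      have e2 : ((s+m+j+2).choose (j+1) : ℚ) * (j+1) = (s+m+j+2).choose j * (s+m+2) := by
        have := Nat.choose_succ_right_eq (s+m+j+2) j
        rw [show s+m+j+2-j = s+m+2 by omega] at this
        exact_mod_cast this
      have e3 : ((s+1+m+(j+1)+1).choose (j+1) : ℚ) =
          (s+m+j+2).choose j + (s+m+j+2).choose (j+1) := by
        rw [show s+1+m+(j+1)+1 = (s+m+j+2)+1 by ring, Nat.choose_succ_succ]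
        push_cast; ring
      rw [e3]
      rw [show s+m+(j+1)+1 = s+m+j+2 by ring] at ih
      push_cast at ih ⊢
      have hj : ((j:ℚ)+1) ≠ 0 := by positivity
      apply mul_left_cancel₀ hj
      generalize (∑ u ∈ Finset.range m, (U u j (s+1+m-u) : ℚ)) = X at *
      generalize ((s+m+j+2).choose (j+1) : ℚ) = A at *
      generalize ((s+m+j+2).choose j : ℚ) = B at *
      generalize ((m+1).choose (j+2) : ℚ) = C at *
      generalize (m.choose (j+1) : ℚ) = D at *
      generalize (U m (j+1) s : ℚ) = Y at *
      linear_combination ((j:ℚ)+1) * ih + ((j:ℚ)+2) * hsum + B * ((j:ℚ)+1) * e1 - D * e2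

/-- interval attached to a pair -/
def ivl (p : ℕ × ℕ) : Finset ℕ := Finset.Icc p.1 p.2

lemma ivl_inj {p q : ℕ × ℕ} (hp : p.1 < p.2) (hq : q.1 < q.2) (h : ivl p = ivl q) : p = q := by
  have h1 := fun x => Finset.ext_iff.mp h x
  simp only [ivl, Finset.mem_Icc] at h1
  have a := h1 p.1
  have b := h1 p.2
  have c := h1 q.1
  have d := h1 q.2
  ext <;> omega

lemma ivl_lam {p q : ℕ × ℕ} (hp : p.1 < p.2) (hq : q.1 < q.2) :
    (ivl p ⊆ ivl q ∨ ivl q ⊆ ivl p ∨ Disjoint (ivl p) (ivl q)) ↔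
    ((p.1 ≤ q.1 ∧ q.2 ≤ p.2) ∨ (q.1 ≤ p.1 ∧ p.2 ≤ q.2) ∨ p.2 < q.1 ∨ q.2 < p.1) := by
  unfold ivl
  rw [Finset.Icc_subset_Icc_iff hp.le, Finset.Icc_subset_Icc_iff hq.le]
  have : Disjoint (Finset.Icc p.1 p.2) (Finset.Icc q.1 q.2) ↔ (p.2 < q.1 ∨ q.2 < p.1) := by
    rw [Finset.disjoint_left]
    simp only [Finset.mem_Icc]
    constructor
    · intro h
      have a := @h p.1
      have b := @h q.1
      omega
    · intro h x; omega
  rw [this]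
  tauto

lemma mem_fam_one {n k : ℕ} (hn : 2 ≤ n) {S : Finset (ℕ × ℕ)} :
    S ∈ fam n k 1 ↔ Good n S ∧ S.card = k ∧ (1, n) ∈ S := by
  rw [mem_fam]
  refine and_congr_right fun hg => and_congr_right fun _ => ?_
  have h1 : 1 ∈ P n S := by
    rw [mem_P]
    refine ⟨by omega, fun p hp => ?_⟩
    have := hg.1 p hp
    omega
  constructor
  · intro h
    obtain ⟨a, ha⟩ := Finset.card_eq_one.mp h
    rw [ha, Finset.mem_singleton] at h1
    subst h1
    obtain ⟨i, h2, h3, _⟩ := last_mem (by omega) hg (by rw [ha]; simp; omega)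
    rw [ha, Finset.mem_singleton] at h3
    subst h3
    exact h2
  · intro h
    rw [Finset.card_eq_one]
    refine ⟨1, Finset.eq_singleton_iff_unique_mem.mpr ⟨h1, fun x hx => ?_⟩⟩
    rw [mem_P] at hx
    have := hx.2 _ h
    simp only at this
    omega

lemma nested_eq (n k : ℕ) (hn : 2 ≤ n) :
    {S | IsIntNested n k S} = (fun S => S.image ivl) '' (fam n k 1 : Set (Finset (ℕ × ℕ))) := by
  classical
  have hcard : ∀ T : Finset (ℕ × ℕ), (∀ p ∈ T, p.1 < p.2) → (T.image ivl).card = T.card := by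
    intro T hT
    apply Finset.card_image_of_injOn
    intro p hp q hq h
    exact ivl_inj (hT p hp) (hT q hq) h
  ext S
  simp only [Set.mem_setOf_eq, Set.mem_image, Finset.mem_coe, mem_fam_one hn]
  constructor
  · rintro ⟨h1, h2, h3, h4⟩
    let T := (Finset.range (n+1) ×ˢ Finset.range (n+1)).filter
      (fun p => 1 ≤ p.1 ∧ p.1 < p.2 ∧ ivl p ∈ S)
    have hT : ∀ p, p ∈ T ↔ (1 ≤ p.1 ∧ p.1 < p.2 ∧ p.2 ≤ n) ∧ ivl p ∈ S := by
      intro p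
      simp only [T, Finset.mem_filter, Finset.mem_product, Finset.mem_range]
      constructor
      · rintro ⟨a, b, c, d⟩
        exact ⟨by omega, d⟩
      · rintro ⟨a, d⟩
        exact ⟨by omega, by omega, by omega, d⟩
    have him : T.image ivl = S := by
      ext A
      rw [Finset.mem_image]
      constructor
      · rintro ⟨p, hp, rfl⟩
        exact ((hT p).mp hp).2
      · intro hA
        obtain ⟨hc, i, j, hi, hij, hj, rfl⟩ := h3 A hA
        rw [Nat.card_Icc] at hc
        exact ⟨(i, j), (hT _).mpr ⟨⟨hi, by simp only; omega, hj⟩, hA⟩, rfl⟩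
    refine ⟨T, ⟨⟨fun p hp => ((hT p).mp hp).1, ?_⟩, ?_, ?_⟩, him⟩
    · intro p hp q hq
      have a := (hT p).mp hp
      have b := (hT q).mp hq
      exact (ivl_lam a.1.2.1 b.1.2.1).mp (h4 _ a.2 _ b.2)
    · rw [← hcard T (fun p hp => ((hT p).mp hp).1.2.1), him, h1]
    · exact (hT _).mpr ⟨⟨le_rfl, by simp only; omega, le_rfl⟩, h2⟩
  · rintro ⟨T, ⟨hg, hc, hf⟩, rfl⟩
    refine ⟨?_, Finset.mem_image_of_mem ivl hf, ?_, ?_⟩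
    · rw [hcard T (fun p hp => (hg.1 p hp).2.1), hc]
    · intro A hA
      obtain ⟨p, hp, rfl⟩ := Finset.mem_image.mp hA
      have := hg.1 p hp
      refine ⟨by rw [ivl, Nat.card_Icc]; omega, p.1, p.2, by omega, by omega, by omega, rfl⟩
    · intro A hA B hB
      obtain ⟨p, hp, rfl⟩ := Finset.mem_image.mp hA
      obtain ⟨q, hq, rfl⟩ := Finset.mem_image.mp hB
      exact (ivl_lam (hg.1 p hp).2.1 (hg.1 q hq).2.1).mpr (hg.2 p hp q hq)

lemma card_nested (n k : ℕ) (hn : 2 ≤ n) :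
    Nat.card {S : Finset (Finset ℕ) // IsIntNested n k S} = (fam n k 1).card := by
  have h : Nat.card {S : Finset (Finset ℕ) // IsIntNested n k S} =
    Set.ncard {S | IsIntNested n k S} := rfl
  rw [h, nested_eq n k hn, Set.ncard_image_of_injOn, Set.ncard_coe_finset]
  have key : ∀ S ∈ fam n k 1, ∀ T ∈ fam n k 1, S.image ivl = T.image ivl → S ⊆ T := by
    intro S hS T hT h p hp
    have : ivl p ∈ T.image ivl := by rw [← h]; exact Finset.mem_image_of_mem _ hp
    obtain ⟨q, hq, hqp⟩ := Finset.mem_image.mp this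
    have := ivl_inj ((mem_fam.mp hT).1.1 q hq).2.1 ((mem_fam.mp hS).1.1 p hp).2.1 hqp
    exact this ▸ hq
  intro S hS T hT h
  exact Finset.Subset.antisymm (key S hS T hT h) (key T hT S hS h.symm)

end KC

theorem stmt10 (n k : ℕ) (hn : 2 ≤ n) (hk1 : 1 ≤ k) (hk : k ≤ n - 1) :
    k * Nat.card {S : Finset (Finset ℕ) // IsIntNested n k S} =
      (n - 2).choose (k - 1) * (n + k - 1).choose (k - 1) := by
  rw [KC.card_nested n k hn]
  obtain ⟨m, rfl⟩ := Nat.exists_eq_add_of_le hn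
  obtain ⟨j, rfl⟩ := Nat.exists_eq_add_of_le hk1
  have h := KC.U_formula j 1 m
  rw [KC.U, show 1 + 1 + m = 2 + m by ring, show j + 1 = 1 + j by ring] at h
  rw [show 2 + m - 2 = m by omega, show 1 + j - 1 = j by omega,
    show 2 + m + (1 + j) - 1 = 1 + m + j + 1 by omega]
  have h' : (j + 1) * (KC.fam (2+m) (1+j) 1).card = 1 * (1+m+j+1).choose j * m.choose j := by
    exact_mod_cast h
  rw [add_comm 1 j, mul_comm (m.choose j)]
  rw [add_comm 1 j] at h'
  rw [h', one_mul]
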